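/- arXiv:0706.0615 — 2 statements merged into one kernel-verified Lean document; each statement's English description precedes it below -/
import Mathlib

section
/- For every ε > 0 and every P ∈ ℝ⁴, the function U_{ε,P}(x) = log(384·ε⁴/(ε² + ‖x−P‖²)⁴) is smooth on ℝ⁴, satisfies Δ(ΔU_{ε,P})(x) = exp(U_{ε,P}(x)) for every x ∈ ℝ⁴, and satisfies ∫_{ℝ⁴} exp(U_{ε,P}(x)) dx = 64π². -/
open MeasureTheory

noncomputable section

/-- The Laplacian of `f : ℝ⁴ → ℝ` at `x`: the trace of the second derivative. -/
def lap (f : EuclideanSpace ℝ (Fin 4) → ℝ) (x : EuclideanSpace ℝ (Fin 4)) : ℝ :=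
  ∑ i : Fin 4,
    fderiv ℝ (fun y => fderiv ℝ f y (EuclideanSpace.single i (1:ℝ))) x
      (EuclideanSpace.single i (1:ℝ))

/-!
Write `s = a + ‖x - P‖²` on an `n`-dimensional Euclidean space. Since `‖∇s‖² = 4 (s - a)` and
`Δ s = 2 n`, the chain rule `Δ (g ∘ s) = g''(s) ‖∇s‖² + g'(s) Δ s` expresses `Δ log s` and `Δ sᵖ`
as combinations of powers of `s`. In `Δ² log s` the coefficients of `s⁻²` and `s⁻³` are multiples
of `n - 4`, so in dimension four only `-96 a² s⁻⁴` survives; with `a = ε²` and `U = log c - 4 log s`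
this is `Δ² U = 384 ε⁴ s⁻⁴ = exp U`, which is where the constant `384` comes from.

For the total mass, write `s^(-σ)` as `Γ(σ)⁻¹ ∫₀^∞ t^(σ - 1) exp (-s t) dt` and exchange the
integrals: the integral over space is Gaussian, and what remains is again a Gamma integral.
-/

open InnerProductSpace Laplacian Module Real Set Topology

section Laplacian

variable {E : Type*} [NormedAddCommGroup E] [InnerProductSpace ℝ E]

theorem contDiff_const_add_norm_sub_sq (a : ℝ) (P : E) {n : WithTop ℕ∞} :
    ContDiff ℝ n fun y ↦ a + ‖y - P‖ ^ 2 :=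
  contDiff_const.add ((contDiff_id.sub contDiff_const).norm_sq ℝ)

theorem fderiv_const_add_norm_sub_sq (a : ℝ) (P : E) :
    fderiv ℝ (fun y ↦ a + ‖y - P‖ ^ 2) = fun x ↦ (2 : ℝ) • innerSL ℝ (x - P) := by
  ext1 x
  rw [fderiv_const_add]
  simpa [two_smul] using ((hasFDerivAt_id x).sub_const P).norm_sq.fderiv

variable [FiniteDimensional ℝ E]

theorem contDiff_laplacian {F : Type*} [NormedAddCommGroup F] [NormedSpace ℝ F] {f : E → F}
    {m n : WithTop ℕ∞} (hf : ContDiff ℝ n f) (hmn : m + 2 ≤ n) : ContDiff ℝ m (Δ f) := by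
  rw [laplacian_eq_iteratedFDeriv_stdOrthonormalBasis]
  exact ContDiff.sum fun i _ ↦ (ContinuousMultilinearMap.apply ℝ (fun _ : Fin 2 ↦ E) F
    ![stdOrthonormalBasis ℝ E i, stdOrthonormalBasis ℝ E i]).contDiff.comp
      (hf.iteratedFDeriv_right hmn)

theorem laplacian_comp {f : E → ℝ} {g g' : ℝ → ℝ} {g'' : ℝ} {x : E} (hf : ContDiffAt ℝ 2 f x)
    (hg : ∀ᶠ t in 𝓝 (f x), HasDerivAt g (g' t) t) (hg' : HasDerivAt g' g'' (f x)) :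
    Δ (fun y ↦ g (f y)) x = g'' * ‖fderiv ℝ f x‖ ^ 2 + g' (f x) * Δ f x := by
  have hf_near : ∀ᶠ y in 𝓝 x, DifferentiableAt ℝ f y :=
    (hf.eventually (by simp)).mono fun y hy ↦ hy.differentiableAt (by simp)
  have fderiv_comp : fderiv ℝ (fun y ↦ g (f y)) =ᶠ[𝓝 x] fun y ↦ g' (f y) • fderiv ℝ f y := by
    filter_upwards [hf.continuousAt.eventually hg, hf_near] with y hgy hfy
    exact (hgy.comp_hasFDerivAt y hfy.hasFDerivAt).fderiv
  have hf' : DifferentiableAt ℝ (fderiv ℝ f) x :=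
    (hf.fderiv_right (m := 1) le_rfl).differentiableAt one_ne_zero
  have hg'f : HasFDerivAt (fun y ↦ g' (f y)) (g'' • fderiv ℝ f x) x :=
    hg'.comp_hasFDerivAt x hf_near.self_of_nhds.hasFDerivAt
  have hessian (v : E) : iteratedFDeriv ℝ 2 (fun y ↦ g (f y)) x ![v, v] =
      g'' * fderiv ℝ f x v ^ 2 + g' (f x) * iteratedFDeriv ℝ 2 f x ![v, v] := by
    rw [iteratedFDeriv_two_apply, fderiv_comp.fderiv_eq,
      (hg'f.fun_smul hf'.hasFDerivAt).fderiv]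
    simp only [iteratedFDeriv_two_apply, Matrix.cons_val_zero, Matrix.cons_val_one, add_apply,
      ContinuousLinearMap.smulRight_apply, smul_apply, smul_eq_mul]
    ring
  simp only [laplacian_eq_iteratedFDeriv_stdOrthonormalBasis, hessian, Finset.sum_add_distrib,
    ← Finset.mul_sum, (stdOrthonormalBasis ℝ E).norm_dual]

theorem laplacian_const_add_norm_sub_sq (a : ℝ) (P x : E) :
    Δ (fun y ↦ a + ‖y - P‖ ^ 2) x = 2 * finrank ℝ E := by
  have hessian (v : E) :
      fderiv ℝ (fun y ↦ (2 : ℝ) • innerSL ℝ (y - P)) x v = (2 : ℝ) • innerSL ℝ v :=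
    DFunLike.congr_fun (((innerSL ℝ).hasFDerivAt.comp x
      ((hasFDerivAt_id x).sub_const P)).const_smul (2 : ℝ)).fderiv v
  simp only [laplacian_eq_iteratedFDeriv_stdOrthonormalBasis, iteratedFDeriv_two_apply,
    fderiv_const_add_norm_sub_sq, hessian]
  simp [mul_comm]

theorem laplacian_comp_const_add_norm_sub_sq {a : ℝ} {P x : E} {g g' : ℝ → ℝ} {g'' : ℝ}
    (hg : ∀ᶠ t in 𝓝 (a + ‖x - P‖ ^ 2), HasDerivAt g (g' t) t)
    (hg' : HasDerivAt g' g'' (a + ‖x - P‖ ^ 2)) :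
    Δ (fun y ↦ g (a + ‖y - P‖ ^ 2)) x =
      4 * ‖x - P‖ ^ 2 * g'' + 2 * finrank ℝ E * g' (a + ‖x - P‖ ^ 2) := by
  rw [laplacian_comp (contDiff_const_add_norm_sub_sq a P).contDiffAt hg hg',
    fderiv_const_add_norm_sub_sq, laplacian_const_add_norm_sub_sq, norm_smul, norm_ofNat,
    innerSL_apply_norm]
  ring

theorem laplacian_log_const_add_norm_sub_sq {a : ℝ} {P x : E} (hx : 0 < a + ‖x - P‖ ^ 2) :
    Δ (fun y ↦ log (a + ‖y - P‖ ^ 2)) x =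
      (2 * finrank ℝ E - 4) * (a + ‖x - P‖ ^ 2) ^ (-1 : ℝ) +
        4 * a * (a + ‖x - P‖ ^ 2) ^ (-2 : ℝ) := by
  rw [laplacian_comp_const_add_norm_sub_sq
    ((eventually_ne_nhds hx.ne').mono fun t ht ↦ hasDerivAt_log ht) (hasDerivAt_inv hx.ne'),
    rpow_neg_one, rpow_neg hx.le, rpow_two]
  field_simp
  ring

theorem laplacian_rpow_const_add_norm_sub_sq {a : ℝ} {P x : E} (hx : a + ‖x - P‖ ^ 2 ≠ 0)
    (p : ℝ) :
    Δ (fun y ↦ (a + ‖y - P‖ ^ 2) ^ p) x =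
      2 * p * (2 * p - 2 + finrank ℝ E) * (a + ‖x - P‖ ^ 2) ^ (p - 1) -
        4 * a * p * (p - 1) * (a + ‖x - P‖ ^ 2) ^ (p - 2) := by
  have hasDerivAt_rpow (q : ℝ) : ∀ᶠ t in 𝓝 (a + ‖x - P‖ ^ 2),
      HasDerivAt (fun t : ℝ ↦ t ^ q) (q * t ^ (q - 1)) t :=
    (eventually_ne_nhds hx).mono fun t ht ↦ hasDerivAt_rpow_const (Or.inl ht)
  have hpow : (a + ‖x - P‖ ^ 2) ^ (p - 1) =
      (a + ‖x - P‖ ^ 2) ^ (p - 2) * (a + ‖x - P‖ ^ 2) := by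
    rw [← rpow_add_one hx]
    ring_nf
  rw [laplacian_comp_const_add_norm_sub_sq (hasDerivAt_rpow p)
    ((hasDerivAt_rpow (p - 1)).self_of_nhds.const_mul p), hpow,
    show p - 1 - 1 = p - 2 by ring]
  ring

theorem laplacian_laplacian_log_const_add_norm_sub_sq {a : ℝ} {P x : E}
    (hx : 0 < a + ‖x - P‖ ^ 2) :
    Δ (Δ fun y ↦ log (a + ‖y - P‖ ^ 2)) x =
      -4 * (finrank ℝ E - 4) * ((finrank ℝ E - 2) * (a + ‖x - P‖ ^ 2) ^ (-2 : ℝ) +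
        8 * a * (a + ‖x - P‖ ^ 2) ^ (-3 : ℝ)) - 96 * a ^ 2 * (a + ‖x - P‖ ^ 2) ^ (-4 : ℝ) := by
  have hs : ContDiff ℝ 2 fun y ↦ a + ‖y - P‖ ^ 2 := contDiff_const_add_norm_sub_sq a P
  have hs_rpow (p : ℝ) : ContDiffAt ℝ 2 (fun y ↦ (a + ‖y - P‖ ^ 2) ^ p) x :=
    hs.contDiffAt.rpow_const_of_ne hx.ne'
  have hs_smul (c p : ℝ) : ContDiffAt ℝ 2 (c • fun y ↦ (a + ‖y - P‖ ^ 2) ^ p) x :=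
    (hs_rpow p).const_smul c
  have hΔlog : Δ (fun y ↦ log (a + ‖y - P‖ ^ 2)) =ᶠ[𝓝 x]
      (2 * finrank ℝ E - 4 : ℝ) • (fun y ↦ (a + ‖y - P‖ ^ 2) ^ (-1 : ℝ)) +
        (4 * a) • fun y ↦ (a + ‖y - P‖ ^ 2) ^ (-2 : ℝ) := by
    filter_upwards [hs.continuous.continuousAt.eventually_const_lt hx] with y hy
    exact laplacian_log_const_add_norm_sub_sq hy
  rw [(laplacian_congr_nhds hΔlog).eq_of_nhds, (hs_smul _ _).laplacian_add (hs_smul _ _),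
    laplacian_smul _ (hs_rpow _), laplacian_smul _ (hs_rpow _),
    laplacian_rpow_const_add_norm_sub_sq hx.ne', laplacian_rpow_const_add_norm_sub_sq hx.ne']
  simp only [smul_eq_mul]
  ring_nf

theorem laplacian_log_const_div_pow {f : E → ℝ} {c : ℝ} (hf : ContDiff ℝ 2 f)
    (hf₀ : ∀ y, f y ≠ 0) (hc : c ≠ 0) (k : ℕ) :
    Δ (fun y ↦ log (c / f y ^ k)) = -(k : ℝ) • Δ (fun y ↦ log (f y)) := by
  have hlog : (fun y ↦ log (c / f y ^ k)) =
      (fun _ ↦ log c) + -(k : ℝ) • fun y ↦ log (f y) := by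
    ext y
    simp [log_div hc (pow_ne_zero k (hf₀ y)), sub_eq_add_neg]
  ext x
  have hlogf : ContDiffAt ℝ 2 (fun y ↦ log (f y)) x := (hf.log hf₀).contDiffAt
  have hklogf : ContDiffAt ℝ 2 (-(k : ℝ) • fun y ↦ log (f y)) x := hlogf.const_smul (-(k : ℝ))
  rw [hlog, contDiffAt_const.laplacian_add hklogf, laplacian_smul _ hlogf]
  simp

theorem laplacian_laplacian_log_const_div_pow_four (hE : finrank ℝ E = 4) {a c : ℝ}
    (ha : 0 < a) (hc : c ≠ 0) (P x : E) :
    Δ (Δ fun y ↦ log (c / (a + ‖y - P‖ ^ 2) ^ 4)) x = 384 * a ^ 2 / (a + ‖x - P‖ ^ 2) ^ 4 := by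
  have hs {n : WithTop ℕ∞} : ContDiff ℝ n fun y ↦ a + ‖y - P‖ ^ 2 :=
    contDiff_const_add_norm_sub_sq a P
  have hpos (y : E) : 0 < a + ‖y - P‖ ^ 2 := by positivity
  have hΔ : ContDiff ℝ 2 (Δ fun y ↦ log (a + ‖y - P‖ ^ 2)) :=
    contDiff_laplacian (hs.log fun y ↦ (hpos y).ne') le_rfl
  rw [laplacian_log_const_div_pow hs (fun y ↦ (hpos y).ne') hc, laplacian_smul _ hΔ.contDiffAt,
    laplacian_laplacian_log_const_add_norm_sub_sq (hpos x), hE, rpow_neg (hpos x).le (4 : ℝ),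
    rpow_ofNat, smul_eq_mul]
  push_cast
  ring

end Laplacian

theorem lap_eq_laplacian {f : EuclideanSpace ℝ (Fin 4) → ℝ} (hf : ContDiff ℝ 2 f) :
    lap f = Δ f := by
  ext x
  have hf' : DifferentiableAt ℝ (fderiv ℝ f) x :=
    (hf.fderiv_right (m := 1) le_rfl).differentiable one_ne_zero x
  simp [lap, laplacian_eq_iteratedFDeriv_orthonormalBasis f (EuclideanSpace.basisFun (Fin 4) ℝ),
    iteratedFDeriv_two_apply, fderiv_clm_apply hf' (differentiableAt_const _)]

section Integral

variable {V : Type*} [NormedAddCommGroup V] [InnerProductSpace ℝ V] [FiniteDimensional ℝ V]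
  [MeasurableSpace V] [BorelSpace V]

theorem integral_rpow_mul_exp_neg_add_norm_sq_mul (a σ : ℝ) {t : ℝ} (ht : 0 < t) :
    ∫ v : V, t ^ (σ - 1) * exp (-((a + ‖v‖ ^ 2) * t)) =
      π ^ (finrank ℝ V / 2 : ℝ) * (t ^ (σ - finrank ℝ V / 2 - 1) * exp (-(a * t))) := by
  have split (v : V) : t ^ (σ - 1) * exp (-((a + ‖v‖ ^ 2) * t)) =
      t ^ (σ - 1) * exp (-(a * t)) * exp (-t * ‖v‖ ^ 2) := by
    rw [mul_assoc, ← exp_add]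
    ring_nf
  simp_rw [split]
  rw [integral_const_mul, GaussianFourier.integral_rexp_neg_mul_sq_norm ht,
    div_rpow pi_nonneg ht.le, sub_right_comm, rpow_sub ht _ (finrank ℝ V / 2 : ℝ)]
  ring

variable {a σ : ℝ}

theorem integrable_rpow_mul_exp_neg_add_norm_sq_mul (ha : 0 < a) (hσ : finrank ℝ V / 2 < σ) :
    Integrable (fun p : V × ℝ ↦ p.2 ^ (σ - 1) * exp (-((a + ‖p.1‖ ^ 2) * p.2)))
      (volume.prod (volume.restrict (Ioi 0))) := by
  rw [integrable_prod_iff' (by fun_prop)]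
  have h_pos : ∀ᵐ t : ℝ ∂volume.restrict (Ioi 0), 0 < t := ae_restrict_mem measurableSet_Ioi
  constructor
  · filter_upwards [h_pos] with t ht
    refine .of_integral_ne_zero ?_
    rw [integral_rpow_mul_exp_neg_add_norm_sq_mul a σ ht]
    positivity
  · have h_int : IntegrableOn (fun t ↦ t ^ (σ - finrank ℝ V / 2 - 1) * exp (-(a * t))) (Ioi 0) :=
      .of_integral_ne_zero (by
        rw [integral_rpow_mul_exp_neg_mul_Ioi (sub_pos.2 hσ) ha]
        have := Gamma_pos_of_pos (sub_pos.2 hσ)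
        positivity)
    refine (h_int.const_mul (π ^ (finrank ℝ V / 2 : ℝ))).congr ?_
    filter_upwards [h_pos] with t ht
    rw [← integral_rpow_mul_exp_neg_add_norm_sq_mul a σ ht]
    congr with v
    exact (norm_of_nonneg (by positivity)).symm

theorem integral_rpow_neg_const_add_norm_sub_sq (ha : 0 < a) (hσ : finrank ℝ V / 2 < σ) (P : V) :
    ∫ v : V, (a + ‖v - P‖ ^ 2) ^ (-σ) =
      π ^ (finrank ℝ V / 2 : ℝ) * Gamma (σ - finrank ℝ V / 2) / Gamma σ *
        a ^ (finrank ℝ V / 2 - σ : ℝ) := by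
  have hσ₀ : 0 < σ := lt_of_le_of_lt (by positivity) hσ
  have gamma_repr (v : V) : (a + ‖v‖ ^ 2) ^ (-σ) =
      (Gamma σ)⁻¹ * ∫ t in Ioi 0, t ^ (σ - 1) * exp (-((a + ‖v‖ ^ 2) * t)) := by
    have hs : 0 < a + ‖v‖ ^ 2 := by positivity
    rw [integral_rpow_mul_exp_neg_mul_Ioi hσ₀ hs, one_div, inv_rpow hs.le, rpow_neg hs.le]
    field_simp [(Gamma_pos_of_pos hσ₀).ne']
  calc ∫ v : V, (a + ‖v - P‖ ^ 2) ^ (-σ)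
    _ = ∫ v : V, (a + ‖v‖ ^ 2) ^ (-σ) :=
      integral_sub_right_eq_self (fun v : V ↦ (a + ‖v‖ ^ 2) ^ (-σ)) P
    _ = (Gamma σ)⁻¹ * ∫ v : V, ∫ t in Ioi 0, t ^ (σ - 1) * exp (-((a + ‖v‖ ^ 2) * t)) := by
      simp_rw [gamma_repr, integral_const_mul]
    _ = (Gamma σ)⁻¹ * ∫ t in Ioi 0, ∫ v : V, t ^ (σ - 1) * exp (-((a + ‖v‖ ^ 2) * t)) := by
      rw [integral_integral_swap (integrable_rpow_mul_exp_neg_add_norm_sq_mul ha hσ)]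
    _ = (Gamma σ)⁻¹ * ∫ t in Ioi 0,
        π ^ (finrank ℝ V / 2 : ℝ) * (t ^ (σ - finrank ℝ V / 2 - 1) * exp (-(a * t))) := by
      rw [setIntegral_congr_fun measurableSet_Ioi fun t ht ↦
        integral_rpow_mul_exp_neg_add_norm_sq_mul a σ ht]
    _ = _ := by
      rw [integral_const_mul, integral_rpow_mul_exp_neg_mul_Ioi (sub_pos.2 hσ) ha, one_div,
        inv_rpow ha.le, ← rpow_neg ha.le, neg_sub]
      ring

theorem integral_const_div_const_add_norm_sub_sq_pow_four (hV : finrank ℝ V = 4) (ha : 0 < a)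
    (c : ℝ) (P : V) :
    ∫ v : V, c / (a + ‖v - P‖ ^ 2) ^ 4 = c * π ^ 2 / (6 * a ^ 2) := by
  have h_rpow (v : V) : c / (a + ‖v - P‖ ^ 2) ^ 4 = c * (a + ‖v - P‖ ^ 2) ^ (-4 : ℝ) := by
    rw [rpow_neg (by positivity), div_eq_mul_inv]
    norm_cast
  have hhalf : (finrank ℝ V / 2 : ℝ) = 2 := by
    rw [hV]
    norm_num
  have hΓ₄ : Gamma 4 = 6 := by simp [Gamma_ofNat_eq_factorial, Nat.factorial]
  simp_rw [h_rpow, integral_const_mul]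
  rw [integral_rpow_neg_const_add_norm_sub_sq ha (by rw [hhalf]; norm_num), hhalf, hΓ₄,
    show (4 : ℝ) - 2 = 2 by norm_num, show (2 : ℝ) - 4 = -2 by norm_num, Gamma_two,
    rpow_neg ha.le, rpow_two, rpow_two]
  field_simp

end Integral

/-- For every `ε > 0` and `P ∈ ℝ⁴`, the bubble
`U_{ε,P}(x) = log(384 ε⁴ / (ε² + ‖x−P‖²)⁴)` is smooth on `ℝ⁴`, solves `Δ²U = e^U`, and
`∫_{ℝ⁴} e^{U_{ε,P}} dx = 64π²`. -/
theorem bubble_family (ε : ℝ) (hε : 0 < ε) (P : EuclideanSpace ℝ (Fin 4)) :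
    ContDiff ℝ (⊤ : ℕ∞)
      (fun x : EuclideanSpace ℝ (Fin 4) =>
        Real.log (384 * ε ^ 4 / (ε ^ 2 + ‖x - P‖ ^ 2) ^ 4)) ∧
    (∀ x : EuclideanSpace ℝ (Fin 4),
      lap (lap (fun x : EuclideanSpace ℝ (Fin 4) =>
          Real.log (384 * ε ^ 4 / (ε ^ 2 + ‖x - P‖ ^ 2) ^ 4))) x
        = Real.exp (Real.log (384 * ε ^ 4 / (ε ^ 2 + ‖x - P‖ ^ 2) ^ 4))) ∧
    ∫ x : EuclideanSpace ℝ (Fin 4),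
        Real.exp (Real.log (384 * ε ^ 4 / (ε ^ 2 + ‖x - P‖ ^ 2) ^ 4))
      = 64 * Real.pi ^ 2 := by
  have hdim : finrank ℝ (EuclideanSpace ℝ (Fin 4)) = 4 := finrank_euclideanSpace_fin
  have hbubble (x : EuclideanSpace ℝ (Fin 4)) :
      0 < 384 * ε ^ 4 / (ε ^ 2 + ‖x - P‖ ^ 2) ^ 4 := by positivity
  have hU {n : WithTop ℕ∞} : ContDiff ℝ n fun x : EuclideanSpace ℝ (Fin 4) ↦
      log (384 * ε ^ 4 / (ε ^ 2 + ‖x - P‖ ^ 2) ^ 4) := by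
    refine (contDiff_const.div ?_ fun x ↦ ?_).log fun x ↦ (hbubble x).ne'
    · exact (contDiff_const_add_norm_sub_sq _ P).pow 4
    · positivity
  simp_rw [exp_log (hbubble _)]
  refine ⟨hU, fun x ↦ ?_, ?_⟩
  · rw [lap_eq_laplacian hU, lap_eq_laplacian (contDiff_laplacian hU le_rfl),
      laplacian_laplacian_log_const_div_pow_four hdim (by positivity) (by positivity)]
    ring
  · rw [integral_const_div_const_add_norm_sub_sq_pow_four hdim (by positivity)]
    field_simp
    norm_num

end
end

section
/- Let B̄ be the closed unit ball of ℝ⁴. For any two distinct points x, y ∈ B̄ with ‖x‖ = 1 (i.e., x on the boundary sphere), Boggio's Green function satisfies G(x, y) = 0, and moreover the derivative in the first variable vanishes: the Fréchet derivative at x of the map z ↦ G(z, y) (defined for z ≠ y) is the zero linear map. -/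
open Metric

noncomputable section

/-- Boggio's auxiliary quantity `[x,y] = √(‖x−y‖² + (1−‖x‖²)(1−‖y‖²))`. -/
def brkt (x y : EuclideanSpace ℝ (Fin 4)) : ℝ :=
  Real.sqrt (‖x - y‖ ^ 2 + (1 - ‖x‖ ^ 2) * (1 - ‖y‖ ^ 2))

/-- Boggio's Green function of the bilaplacian with Dirichlet boundary conditions on the
unit ball of `ℝ⁴`: `G(x,y) = (1/(8π²)) ∫₁^{[x,y]/‖x−y‖} (v²−1)/v³ dv`. -/
def boggioG (x y : EuclideanSpace ℝ (Fin 4)) : ℝ :=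
  (1 / (8 * Real.pi ^ 2)) * ∫ v in (1:ℝ)..(brkt x y / ‖x - y‖), (v ^ 2 - 1) / v ^ 3

/-!
On the unit sphere `[x,y] = ‖x − y‖`, so the upper limit `[x,y] / ‖x − y‖` equals `1` there and the
integral vanishes. The upper limit is differentiable at such points, and by the fundamental theorem
of calculus the gradient of the integral is the gradient of the upper limit times the integrand at
`1`, which is `0`.
-/

open MeasureTheory
open scoped Topology

theorem hasFDerivAt_integral_comp_right {E F : Type*} [NormedAddCommGroup E] [NormedSpace ℝ E]
    [NormedAddCommGroup F] [NormedSpace ℝ F] [CompleteSpace F] {f : ℝ → F} {g : E → ℝ}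
    {g' : E →L[ℝ] ℝ} {a : ℝ} {x : E} (hg : HasFDerivAt g g' x)
    (hf : IntervalIntegrable f volume a (g x)) (hmeas : StronglyMeasurableAtFilter f (𝓝 (g x)))
    (hcont : ContinuousAt f (g x)) :
    HasFDerivAt (fun z => ∫ v in a..g z, f v) (g'.smulRight (f (g x))) x := by
  have hF := intervalIntegral.integral_hasDerivAt_right hf hmeas hcont
  exact (hF.hasFDerivAt.comp x hg).congr_fderiv (by ext; simp)

section BoggioKernel

variable {E F : Type*} [NormedAddCommGroup E] [NormedAddCommGroup F] [NormedSpace ℝ F]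

/-- Boggio's quantity `[x,y]` in an arbitrary normed space; for `ℝ⁴` it is `brkt`. -/
def boggioBracket (x y : E) : ℝ :=
  √(‖x - y‖ ^ 2 + (1 - ‖x‖ ^ 2) * (1 - ‖y‖ ^ 2))

/-- The upper limit `[x,y] / ‖x − y‖` of the integral in Boggio's formula, with value `0` when
`x = y`. -/
def boggioRatio (x y : E) : ℝ :=
  boggioBracket x y / ‖x - y‖

/-- The kernel `∫₁^{[x,y]/‖x−y‖} f(v) dv` with an arbitrary density `f`. Up to a constant, Boggio's
Green function of the polyharmonic operator `(-Δ)ᵐ` on the unit ball of `ℝ²ᵐ` is the case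
`f(v) = (v² − 1)ᵐ⁻¹ / v²ᵐ⁻¹`. -/
def boggioKernel (f : ℝ → F) (x y : E) : F :=
  ∫ v in (1 : ℝ)..boggioRatio x y, f v

theorem boggioBracket_of_norm_eq_one {x : E} (hx : ‖x‖ = 1) (y : E) :
    boggioBracket x y = ‖x - y‖ := by
  simp [boggioBracket, hx]

theorem boggioRatio_of_norm_eq_one {x y : E} (hx : ‖x‖ = 1) (hxy : x ≠ y) :
    boggioRatio x y = 1 := by
  rw [boggioRatio, boggioBracket_of_norm_eq_one hx, div_self (norm_sub_eq_zero_iff.not.mpr hxy)]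

theorem boggioKernel_of_norm_eq_one (f : ℝ → F) {x y : E} (hx : ‖x‖ = 1) (hxy : x ≠ y) :
    boggioKernel f x y = 0 := by
  rw [boggioKernel, boggioRatio_of_norm_eq_one hx hxy, intervalIntegral.integral_same]

variable [InnerProductSpace ℝ E]

theorem differentiableAt_boggioBracket_left {x y : E} (h : boggioBracket x y ≠ 0) :
    DifferentiableAt ℝ (boggioBracket · y) x := by
  have h_radicand : ‖x - y‖ ^ 2 + (1 - ‖x‖ ^ 2) * (1 - ‖y‖ ^ 2) ≠ 0 := fun h₀ =>
    h (by rw [boggioBracket, h₀, Real.sqrt_zero])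
  have h_dist : DifferentiableAt ℝ (fun z => ‖z - y‖ ^ 2) x :=
    (differentiableAt_id.sub_const y).norm_sq ℝ
  have h_norm : DifferentiableAt ℝ (fun z : E => ‖z‖ ^ 2) x := differentiableAt_id.norm_sq ℝ
  exact (h_dist.add ((h_norm.const_sub 1).mul_const _)).sqrt h_radicand

theorem differentiableAt_boggioRatio_left {x y : E} (hxy : x ≠ y) (h : boggioBracket x y ≠ 0) :
    DifferentiableAt ℝ (boggioRatio · y) x := by
  have h_dist : DifferentiableAt ℝ (fun z => ‖z - y‖) x :=
    (differentiableAt_id.sub_const y).norm ℝ (sub_ne_zero.mpr hxy)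
  simp only [boggioRatio, div_eq_mul_inv]
  exact (differentiableAt_boggioBracket_left h).mul
    (h_dist.fun_inv (norm_sub_eq_zero_iff.not.mpr hxy))

theorem hasFDerivAt_boggioKernel_left_zero [CompleteSpace F] {f : ℝ → F}
    (hmeas : StronglyMeasurableAtFilter f (𝓝 1)) (hcont : ContinuousAt f 1) (hf : f 1 = 0)
    {x y : E} (hx : ‖x‖ = 1) (hxy : x ≠ y) :
    HasFDerivAt (boggioKernel f · y) (0 : E →L[ℝ] F) x := by
  have h_bracket : boggioBracket x y ≠ 0 := by
    rwa [boggioBracket_of_norm_eq_one hx, Ne, norm_sub_eq_zero_iff]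
  have h_ratio : boggioRatio x y = 1 := boggioRatio_of_norm_eq_one hx hxy
  have h_deriv := hasFDerivAt_integral_comp_right (f := f) (a := 1)
    (differentiableAt_boggioRatio_left hxy h_bracket).hasFDerivAt
    (by rw [h_ratio]) (by rwa [h_ratio]) (by rwa [h_ratio])
  exact h_deriv.congr_fderiv (by ext; simp [h_ratio, hf])

theorem boggioG_boundary_general [CompleteSpace F] {f : ℝ → F}
    (hmeas : StronglyMeasurableAtFilter f (𝓝 1)) (hcont : ContinuousAt f 1) (hf : f 1 = 0)
    {x y : E} (hx : ‖x‖ = 1) (hxy : x ≠ y) :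
    boggioKernel f x y = 0 ∧ HasFDerivAt (boggioKernel f · y) (0 : E →L[ℝ] F) x :=
  ⟨boggioKernel_of_norm_eq_one f hx hxy, hasFDerivAt_boggioKernel_left_zero hmeas hcont hf hx hxy⟩

end BoggioKernel

/-- The normalised integrand of Boggio's Green function of the bilaplacian on the unit ball
of `ℝ⁴`. -/
def biharmonicDensity (v : ℝ) : ℝ :=
  1 / (8 * Real.pi ^ 2) * ((v ^ 2 - 1) / v ^ 3)

theorem biharmonicDensity_one : biharmonicDensity 1 = 0 := by
  simp [biharmonicDensity]

theorem stronglyMeasurable_biharmonicDensity : StronglyMeasurable biharmonicDensity :=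
  Measurable.stronglyMeasurable (by unfold biharmonicDensity; fun_prop)

theorem continuousAt_biharmonicDensity {v : ℝ} (hv : v ≠ 0) :
    ContinuousAt biharmonicDensity v := by
  have h_quot : ContinuousAt (fun v : ℝ => (v ^ 2 - 1) / v ^ 3) v :=
    ContinuousAt.div (by fun_prop) (by fun_prop) (pow_ne_zero 3 hv)
  exact h_quot.const_mul _

theorem boggioG_eq_boggioKernel (x y : EuclideanSpace ℝ (Fin 4)) :
    boggioG x y = boggioKernel biharmonicDensity x y :=
  (intervalIntegral.integral_const_mul _ _).symm

/-- Dirichlet boundary conditions for Boggio's Green function: if `‖x‖ = 1`, `y` is in the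
closed unit ball and `x ≠ y`, then `G(x,y) = 0` and the Fréchet derivative in the first
variable vanishes at `x`. -/
theorem boggioG_boundary (x y : EuclideanSpace ℝ (Fin 4)) (hx : ‖x‖ = 1)
    (hy : y ∈ closedBall (0 : EuclideanSpace ℝ (Fin 4)) 1) (hxy : x ≠ y) :
    boggioG x y = 0 ∧ fderiv ℝ (fun z => boggioG z y) x = 0 := by
  have h := boggioG_boundary_general
    stronglyMeasurable_biharmonicDensity.stronglyMeasurableAtFilter
    (continuousAt_biharmonicDensity one_ne_zero) biharmonicDensity_one hx hxy
  simpa only [boggioG_eq_boggioKernel] using h.imp_right HasFDerivAt.fderiv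

end
end
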